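/- arXiv:1302.4285 — 2 statements merged into one kernel-verified Lean document; each statement's English description precedes it below -/
import Mathlib

section
/- The special value ζ₂(2,1,1,5,3,3; G₂) equals (5/4)·ζ(4)·ζ(11) + (1043857/23328)·ζ(2)·ζ(13) − (41971423/559872)·ζ(15). -/
/-- The zeta-function of the root system `G₂` at a tuple of natural number exponents:
`ζ₂(s₁,…,s₆;G₂) = ∑_{m,n≥1} 1/(m^{s₁} n^{s₂} (m+n)^{s₃} (m+2n)^{s₄} (m+3n)^{s₅} (2m+3n)^{s₆})`. -/
noncomputable def zetaG2 (s₁ s₂ s₃ s₄ s₅ s₆ : ℕ) : ℝ :=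
  ∑' (m : ℕ+) (n : ℕ+),
    1 / (((m : ℕ) : ℝ) ^ s₁ * ((n : ℕ) : ℝ) ^ s₂ * (((m : ℕ) : ℝ) + ((n : ℕ) : ℝ)) ^ s₃ *
      (((m : ℕ) : ℝ) + 2 * ((n : ℕ) : ℝ)) ^ s₄ * (((m : ℕ) : ℝ) + 3 * ((n : ℕ) : ℝ)) ^ s₅ *
      (2 * ((m : ℕ) : ℝ) + 3 * ((n : ℕ) : ℝ)) ^ s₆)


namespace G2Aux

/-- real zeta value -/
noncomputable def z (k : ℕ) : ℝ := ∑' n : ℕ, 1 / (n : ℝ) ^ k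

lemma z_cast {k : ℕ} (hk : 1 < k) : ((z k : ℝ) : ℂ) = riemannZeta k := by
  rw [zeta_nat_eq_tsum_of_gt_one hk, z]
  push_cast
  rfl

lemma z_pnat {k : ℕ} (hk : 1 < k) : HasSum (fun n : ℕ+ => 1 / ((n : ℕ) : ℝ) ^ k) (z k) := by
  have h : Summable (fun n : ℕ => 1 / (n : ℝ) ^ k) := Real.summable_one_div_nat_pow.mpr hk
  have := h.hasSum
  rw [hasSum_pnat_iff (f := fun n : ℕ => 1 / (n : ℝ) ^ k)]
  have h0 : k ≠ 0 := by omega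
  simpa [z, h0] using this

lemma _root_.HasSum.g2_congr {ι : Type*} {f g : ι → ℝ} {v w : ℝ} (h : HasSum f v)
    (hv : w = v) (e : ∀ i, g i = f i) : HasSum g w := by
  rwa [funext e, hv]

lemma int_even {k : ℕ} (hk : 1 < k) (he : Even k) :
    HasSum (fun m : ℤ => 1 / (m : ℝ) ^ k) (2 * z k) := by
  have hs : Summable (fun m : ℤ => 1 / (m : ℝ) ^ k) := Real.summable_one_div_int_pow.mpr hk
  have h := hs.hasSum
  rw [tsum_int_eq_zero_add_tsum_pnat hs] at h
  have e := (z_pnat hk).tsum_eq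
  have h0 : k ≠ 0 := by omega
  simp only [Int.cast_neg, he.neg_pow, Int.cast_natCast, e] at h
  simpa [h0, two_mul] using h

/-- shifts by integers -/
lemma shift {f : ℤ → ℝ} {v : ℝ} (h : HasSum f v) (j : ℤ) : HasSum (fun m => f (m + j)) v :=
  (Equiv.addRight j).hasSum_iff.mpr h

lemma refl {f : ℤ → ℝ} {v : ℝ} (h : HasSum f v) (j : ℤ) : HasSum (fun m => f (j - m)) v :=
  (Equiv.subLeft j).hasSum_iff.mpr h

lemma summable_half {k : ℕ} (hk : 1 < k) (q : ℤ) :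
    Summable (fun m : ℤ => 1 / ((m : ℝ) + q / 2) ^ k) := by
  have hs : Summable (fun m : ℤ => 1 / (m : ℝ) ^ k) := Real.summable_one_div_int_pow.mpr hk
  have hinj : Function.Injective (fun m : ℤ => 2 * m + q) := by
    intro a b h; simp at h; exact h
  have h2 := (hs.comp_injective hinj).mul_left ((2 : ℝ) ^ k)
  refine h2.congr fun m => ?_
  simp only [Function.comp]
  push_cast
  rw [show (2 * (m : ℝ) + q) = 2 * ((m : ℝ) + q / 2) by ring, mul_pow]
  field_simp

lemma half_odd {k : ℕ} (hk : 1 < k) (ho : Odd k) (q : ℤ) :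
    HasSum (fun m : ℤ => 1 / ((m : ℝ) + q / 2) ^ k) 0 := by
  have h := (summable_half hk q).hasSum
  have h' := refl h (-q)
  have e : (fun m : ℤ => 1 / ((((-q - m : ℤ)) : ℝ) + q / 2) ^ k)
      = fun m : ℤ => - (1 / ((m : ℝ) + q / 2) ^ k) := by
    funext m
    push_cast
    rw [show (-(q : ℝ) - m + q / 2) = -((m : ℝ) + q / 2) by ring, ho.neg_pow, div_neg]
  rw [e] at h'
  have := h.neg.unique h'
  have h0 : ∑' m : ℤ, 1 / ((m : ℝ) + q / 2) ^ k = 0 := by linarith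
  rwa [h0] at h

lemma half_even_of_even {k : ℕ} (hk : 1 < k) (he : Even k) (q : ℤ) (hq : Even q) :
    HasSum (fun m : ℤ => 1 / ((m : ℝ) + q / 2) ^ k) (2 * z k) := by
  obtain ⟨j, rfl⟩ := hq
  have := shift (int_even hk he) j
  convert this using 2 with m
  push_cast
  ring

lemma int_even_odd {f : ℤ → ℝ} {a b : ℝ} (he : HasSum (fun k => f (2 * k)) a)
    (ho : HasSum (fun k => f (2 * k + 1)) b) : HasSum f (a + b) := by
  have := mul_right_injective₀ (two_ne_zero' ℤ)
  replace ho := ((add_left_injective 1).comp this).hasSum_range_iff.2 ho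
  refine (this.hasSum_range_iff.2 he).add_isCompl ?_ ho
  simpa [Function.comp_def] using Int.isCompl_even_odd

lemma half_sq_of_odd (q : ℤ) (hq : Odd q) :
    HasSum (fun m : ℤ => 1 / ((m : ℝ) + q / 2) ^ 2) (6 * z 2) := by
  have h := (int_even (k := 2) (by norm_num) (by decide))
  have hs := (summable_half (k := 2) (by norm_num) 1).hasSum
  set s := ∑' m : ℤ, 1 / ((m : ℝ) + (1 : ℤ) / 2) ^ 2
  have he : HasSum (fun m : ℤ => 1 / (((2 * m : ℤ)) : ℝ) ^ 2) (2 * z 2 / 4) := by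
    have := h.div_const 4
    refine this.congr_fun fun m => ?_
    push_cast
    rw [mul_pow, div_div]
    norm_num [mul_comm]
  have ho : HasSum (fun m : ℤ => 1 / (((2 * m + 1 : ℤ)) : ℝ) ^ 2) (s / 4) := by
    have := hs.div_const 4
    refine this.congr_fun fun m => ?_
    push_cast
    rw [show (2 * (m : ℝ) + 1) = 2 * ((m : ℝ) + 1 / 2) by ring, mul_pow, div_div]
    norm_num [mul_comm]
  have hc := (int_even_odd (f := fun m : ℤ => 1 / (m : ℝ) ^ 2) he ho).unique h
  have hs6 : s = 6 * z 2 := by linarith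
  rw [hs6] at hs
  obtain ⟨j, rfl⟩ := hq
  have := shift hs j
  refine this.congr_fun fun m => ?_
  push_cast
  ring_nf

lemma tele_base : HasSum (fun n : ℕ => 1 / ((n : ℝ) + 1) - 1 / ((n : ℝ) + 2)) 1 := by
  rw [hasSum_iff_tendsto_nat_of_nonneg]
  · have e : ∀ N : ℕ, ∑ n ∈ Finset.range N, (1 / ((n : ℝ) + 1) - 1 / ((n : ℝ) + 2))
        = 1 - 1 / ((N : ℝ) + 1) := by
      intro N
      induction N with
      | zero => simp
      | succ N ih => rw [Finset.sum_range_succ, ih]; push_cast; ring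
    simp only [e]
    simpa using (tendsto_one_div_add_atTop_nhds_zero_nat (𝕜 := ℝ)).const_sub 1
  · intro n
    have : 1 / ((n : ℝ) + 2) ≤ 1 / ((n : ℝ) + 1) := by
      apply one_div_le_one_div_of_le <;> linarith [(Nat.cast_nonneg n : (0 : ℝ) ≤ n)]
    linarith

lemma tele_one : HasSum (fun m : ℤ => 1 / ((m : ℝ) + 1) - 1 / (m : ℝ)) 0 := by
  have h1 : HasSum (fun n : ℕ => 1 / ((n : ℝ) + 1) - 1 / (n : ℝ)) 0 := by
    rw [← hasSum_nat_add_iff' 1]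
    refine (tele_base.neg).g2_congr (by simp) fun n => ?_
    push_cast
    ring
  have h2 := HasSum.of_nat_of_neg_add_one
    (f := fun m : ℤ => 1 / ((m : ℝ) + 1) - 1 / (m : ℝ)) (m := 0) (m' := 0)
    (h1.congr_fun fun n => by push_cast; ring)
    (h1.congr_fun fun n => by
      push_cast
      rw [show (-((n : ℝ) + 1) + 1) = -(n : ℝ) by ring, div_neg, div_neg]
      ring)
  simpa using h2

lemma tele_nat (j : ℕ) : HasSum (fun m : ℤ => 1 / ((m : ℝ) + j) - 1 / (m : ℝ)) 0 := by
  induction j with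
  | zero => simp
  | succ j ih =>
    have := (shift tele_one j).add ih
    rw [add_zero] at this
    refine this.congr_fun fun m => ?_
    push_cast
    ring

lemma tele_int (j : ℤ) : HasSum (fun m : ℤ => 1 / ((m : ℝ) + j) - 1 / (m : ℝ)) 0 := by
  obtain ⟨k, rfl | rfl⟩ := j.eq_nat_or_neg
  · simpa using tele_nat k
  · have := (shift (tele_nat k) (-k)).neg
    rw [neg_zero] at this
    refine this.congr_fun fun m => ?_
    push_cast
    ring

lemma pole_bound (x c : ℝ) :
    |1 / (x + c) - 1 / x| ≤ |c| * ((1 / (x + c)) ^ 2 + (1 / x) ^ 2) := by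
  have aux : ∀ y : ℝ, |1 / y| ≤ |y| * (1 / y) ^ 2 := by
    intro y
    rcases eq_or_ne y 0 with rfl | hy
    · simp
    · rw [← sq_abs (1 / y), abs_div, abs_one]
      have : 0 < |y| := abs_pos.mpr hy
      apply le_of_eq
      field_simp
  rcases eq_or_ne x 0 with rfl | hx
  · simpa using aux c
  rcases eq_or_ne (x + c) 0 with hc | hc
  · have : x = -c := by linarith
    subst this
    simpa using aux c
  · have e : 1 / (x + c) - 1 / x = -c * (1 / (x + c) * (1 / x)) := by
      field_simp
      ring
    rw [e, abs_mul, abs_neg]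
    apply mul_le_mul_of_nonneg_left _ (abs_nonneg c)
    rw [abs_le]
    constructor <;> nlinarith [sq_nonneg (1 / (x + c) + 1 / x), sq_nonneg (1 / (x + c) - 1 / x),
      sq_nonneg (1 / (x + c)), sq_nonneg (1 / x)]

lemma half_one (q : ℤ) : HasSum (fun m : ℤ => 1 / ((m : ℝ) + q / 2) - 1 / (m : ℝ)) 0 := by
  have hsum : Summable (fun m : ℤ => 1 / ((m : ℝ) + q / 2) - 1 / (m : ℝ)) := by
    have a := (summable_half (k := 2) (by norm_num) q)
    have b := (summable_half (k := 2) (by norm_num) 0)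
    refine Summable.of_norm_bounded ((a.add b).mul_left |(q : ℝ) / 2|) fun m => ?_
    rw [Real.norm_eq_abs]
    have hb : (1 : ℝ) / ((m : ℝ) + ((0 : ℤ) : ℝ) / 2) ^ 2 = (1 / (m : ℝ)) ^ 2 := by simp
    rw [hb, show (1 : ℝ) / ((m : ℝ) + (q : ℝ) / 2) ^ 2 = (1 / ((m : ℝ) + (q : ℝ) / 2)) ^ 2 by
      simp]
    exact pole_bound _ _
  have h := hsum.hasSum
  set s := ∑' m : ℤ, (1 / ((m : ℝ) + q / 2) - 1 / (m : ℝ))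
  have h' := (refl h (-q)).add h
  have e := tele_int q
  have e2 : HasSum (fun m : ℤ => 1 / ((m : ℝ) + q) - 1 / (m : ℝ)) (s + s) := by
    refine h'.congr_fun fun m => ?_
    push_cast
    rw [show (-(q : ℝ) - m + q / 2) = -((m : ℝ) + q / 2) by ring,
      show (-(q : ℝ) - m) = -((m : ℝ) + q) by ring, div_neg, div_neg]
    ring
  have := e.unique e2
  have hs : s = 0 := by linarith
  rwa [hs] at h

/-- the one variable rational function -/
noncomputable def g (x : ℝ) : ℝ :=
  1 / (x ^ 2 * (x + 1) * (x + 2) ^ 5 * (x + 3) ^ 3 * (2 * x + 3) ^ 3)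

/-- its partial fraction expansion -/
noncomputable def pf (x : ℝ) : ℝ :=
  1 / 23328 * (1 / (x + 0) ^ 2)
  + 1 / 8 * (1 / (x + 1) - 1 / x)
  + (-38912 / 729) * (1 / (x + 3 / 2) - 1 / x)
  + 6656 / 729 * (1 / (x + 3 / 2) ^ 2)
  + (-256 / 243) * (1 / (x + 3 / 2) ^ 3)
  + 3413 / 64 * (1 / (x + 2) - 1 / x)
  + 139 / 8 * (1 / (x + 2) ^ 2)
  + 83 / 16 * (1 / (x + 2) ^ 3)
  + 5 / 4 * (1 / (x + 2) ^ 4)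
  + 1 / 4 * (1 / (x + 2) ^ 5)
  + (-49 / 648) * (1 / (x + 3) - 1 / x)
  + (-49 / 2916) * (1 / (x + 3) ^ 2)
  + (-1 / 486) * (1 / (x + 3) ^ 3)

lemma g_eq (x : ℝ) : g x = pf x
    - (if x = 0 then 277 / 279936 else 0)
    - (if x = -1 then -21 / 16 else 0)
    - (if x = -2 then 9695 / 64 else 0)
    - (if x = -3 then -8683 / 34992 else 0)
    - (if x = -3 / 2 then 536576 / 2187 else 0) := by
  by_cases h0 : x = 0
  · subst h0; norm_num [g, pf]
  by_cases h1 : x = -1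
  · subst h1; norm_num [g, pf]
  by_cases h2 : x = -2
  · subst h2; norm_num [g, pf]
  by_cases h3 : x = -3
  · subst h3; norm_num [g, pf]
  by_cases h4 : x = -3 / 2
  · subst h4; norm_num [g, pf]
  simp only [h0, h1, h2, h3, h4, if_false, sub_zero]
  have k1 : x + 1 ≠ 0 := fun h => h1 (by linarith)
  have k2 : x + 2 ≠ 0 := fun h => h2 (by linarith)
  have k3 : x + 3 ≠ 0 := fun h => h3 (by linarith)
  have k4 : 2 * x + 3 ≠ 0 := fun h => h4 (by linarith)
  unfold g pf
  obtain ⟨y, hy⟩ : ∃ y, y = 2 * x + 3 := ⟨_, rfl⟩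
  have e : x + 3 / 2 = y / 2 := by rw [hy]; ring
  rw [← hy] at k4
  rw [e, add_zero, ← hy]
  field_simp
  rw [hy]
  ring

/-- sum of a term of the expansion, with exponent at least two -/
lemma term_pow {n : ℕ} (hn : 0 < n) {p : ℝ} {q : ℤ} (hq : 2 * p * n = q) {k : ℕ} {v : ℝ}
    (h : HasSum (fun m : ℤ => 1 / ((m : ℝ) + q / 2) ^ k) v) :
    HasSum (fun m : ℤ => 1 / ((m : ℝ) / n + p) ^ k) ((n : ℝ) ^ k * v) := by
  have hn' : (n : ℝ) ≠ 0 := by positivity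
  refine (h.mul_left ((n : ℝ) ^ k)).congr_fun fun m => ?_
  rw [← hq, show (m : ℝ) / n + p = ((m : ℝ) + 2 * p * n / 2) / n by field_simp, div_pow]
  rw [one_div_div, mul_one_div]

lemma term_one {n : ℕ} (hn : 0 < n) {p : ℝ} {q : ℤ} (hq : 2 * p * n = q) :
    HasSum (fun m : ℤ => 1 / ((m : ℝ) / n + p) - 1 / ((m : ℝ) / n)) 0 := by
  have hn' : (n : ℝ) ≠ 0 := by positivity
  refine ((half_one q).mul_left (n : ℝ)).g2_congr (by simp) fun m => ?_
  rw [← hq, show (m : ℝ) / n + p = ((m : ℝ) + 2 * p * n / 2) / n by field_simp]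
  rw [one_div_div, one_div_div, mul_sub, mul_one_div, mul_one_div]

lemma term_pole {n : ℕ} (hn : 0 < n) {p : ℝ} {q : ℤ} (hq : p * n = q) (v : ℝ) :
    HasSum (fun m : ℤ => if (m : ℝ) / n = p then v else 0) v := by
  have hn' : (n : ℝ) ≠ 0 := by positivity
  refine (hasSum_ite_eq q v).congr_fun fun m => ?_
  have : (m : ℝ) / n = p ↔ m = q := by
    rw [div_eq_iff hn', hq]
    exact Int.cast_inj
  simp only [this]

lemma inner (n : ℕ) (hn : 0 < n) (V W : ℝ)
    (hV : HasSum (fun m : ℤ => 1 / ((m : ℝ) + ((3 * n : ℤ) : ℝ) / 2) ^ 2) V)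
    (hW : HasSum (fun m : ℤ => if (m : ℝ) / n = -3 / 2 then (536576 / 2187 : ℝ) else 0) W) :
    HasSum (fun m : ℤ => g ((m : ℝ) / n))
      ((n : ℝ) ^ 4 * (5 / 2 * z 4)
        + (n : ℝ) ^ 2 * (2 * (1 / 23328 + 139 / 8 - 49 / 2916) * z 2 + 6656 / 729 * V)
        - (277 / 279936 - 21 / 16 + 9695 / 64 - 8683 / 34992) - W) := by
  have hi : ∀ k : ℕ, 1 < k → Even k → ∀ j : ℤ, HasSum (fun m : ℤ => 1 / ((m : ℝ) / n + j) ^ k)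
      ((n : ℝ) ^ k * (2 * z k)) := fun k hk he j =>
    term_pow hn (q := 2 * (j * n)) (by push_cast; ring)
      (half_even_of_even hk he _ (even_two_mul _))
  have ho : ∀ k : ℕ, 1 < k → Odd k → ∀ (p : ℝ) (q : ℤ), 2 * p * n = q →
      HasSum (fun m : ℤ => 1 / ((m : ℝ) / n + p) ^ k) 0 := fun k hk he p q hq => by
    simpa using term_pow hn hq (half_odd hk he q)
  have a0 := hi 2 (by norm_num) (by decide) 0
  have a2 := hi 2 (by norm_num) (by decide) 2
  have a3 := hi 2 (by norm_num) (by decide) 3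
  have b2 := hi 4 (by norm_num) (by decide) 2
  have h2 := term_pow hn (p := 3 / 2) (by push_cast; ring) hV
  have h3 := ho 3 (by norm_num) (by decide) (3 / 2) (3 * n) (by push_cast; ring)
  have c3 := ho 3 (by norm_num) (by decide) 2 (4 * n) (by push_cast; ring)
  have c5 := ho 5 (by norm_num) (by decide) 2 (4 * n) (by push_cast; ring)
  have d3 := ho 3 (by norm_num) (by decide) 3 (6 * n) (by push_cast; ring)
  have t1 := term_one hn (p := 1) (q := 2 * n) (by push_cast; ring)
  have th := term_one hn (p := 3 / 2) (q := 3 * n) (by push_cast; ring)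
  have t2 := term_one hn (p := 2) (q := 4 * n) (by push_cast; ring)
  have t3 := term_one hn (p := 3) (q := 6 * n) (by push_cast; ring)
  have p0 := term_pole hn (p := 0) (q := 0) (by simp) (277 / 279936)
  have p1 := term_pole hn (p := -1) (q := -n) (by simp) (-21 / 16)
  have p2 := term_pole hn (p := -2) (q := -2 * n) (by simp) (9695 / 64)
  have p3 := term_pole hn (p := -3) (q := -3 * n) (by simp) (-8683 / 34992)
  have key := (((((a0.mul_left (1 / 23328)).add (t1.mul_left (1 / 8))).add
    (th.mul_left (-38912 / 729))).add (h2.mul_left (6656 / 729))).add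
    (h3.mul_left (-256 / 243))).add (t2.mul_left (3413 / 64))
  have key2 := (((key.add (a2.mul_left (139 / 8))).add (c3.mul_left (83 / 16))).add
    (b2.mul_left (5 / 4))).add (c5.mul_left (1 / 4))
  have key3 := ((key2.add (t3.mul_left (-49 / 648))).add (a3.mul_left (-49 / 2916))).add
    (d3.mul_left (-1 / 486))
  have key4 := ((((key3.sub p0).sub p1).sub p2).sub p3).sub hW
  refine key4.g2_congr (by ring) fun m => ?_
  rw [g_eq]
  simp only [pf, Int.cast_zero, Int.cast_ofNat]

/-- the summand -/
noncomputable def F (x y : ℝ) : ℝ :=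
  1 / (x ^ 2 * y ^ 1 * (x + y) ^ 1 * (x + 2 * y) ^ 5 * (x + 3 * y) ^ 3 * (2 * x + 3 * y) ^ 3)

lemma F_eq_g (x y : ℝ) (hy : y ≠ 0) : F x y = 1 / y ^ 15 * g (x / y) := by
  unfold F g
  rw [show x / y + 1 = (x + y) / y by field_simp, show x / y + 2 = (x + 2 * y) / y by field_simp,
    show x / y + 3 = (x + 3 * y) / y by field_simp,
    show 2 * (x / y) + 3 = (2 * x + 3 * y) / y by field_simp]
  rw [one_div_mul_one_div]
  congr 1
  field_simp

lemma F_bound (m n : ℤ) : ‖F m n‖ ≤ 2 * ((1 / (m : ℝ) ^ 2) * (1 / (n : ℝ) ^ 2)) := by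
  by_cases h : (m : ℝ) ^ 2 * (n : ℝ) ^ 1 * ((m : ℝ) + n) ^ 1 * ((m : ℝ) + 2 * n) ^ 5
      * ((m : ℝ) + 3 * n) ^ 3 * (2 * (m : ℝ) + 3 * n) ^ 3 = 0
  · rw [F, h]
    simp only [div_zero, norm_zero]
    positivity
  have cast1 : ∀ k : ℤ, (k : ℝ) ≠ 0 → (1 : ℝ) ≤ |(k : ℝ)| := by
    intro k hk
    have : k ≠ 0 := by exact_mod_cast hk
    exact_mod_cast Int.one_le_abs this
  simp only [mul_eq_zero, not_or, pow_eq_zero_iff, ne_eq, OfNat.ofNat_ne_zero, one_ne_zero,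
    not_false_eq_true] at h
  obtain ⟨⟨⟨⟨⟨h1, h2⟩, h3⟩, h4⟩, h5⟩, h6⟩ := h
  have a2 := cast1 n h2
  have a3 := cast1 (m + n) (by push_cast; exact h3)
  have a4 := cast1 (m + 2 * n) (by push_cast; exact h4)
  have a5 := cast1 (m + 3 * n) (by push_cast; exact h5)
  have a6 := cast1 (2 * m + 3 * n) (by push_cast; exact h6)
  push_cast at a3 a4 a5 a6
  have m1 : 0 < (m : ℝ) ^ 2 := by positivity
  have tri : |(n : ℝ)| ≤ |(m : ℝ) + n| + |(m : ℝ) + 2 * n| := by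
    have := abs_sub ((m : ℝ) + 2 * n) ((m : ℝ) + n)
    rw [show (m : ℝ) + 2 * n - (m + n) = n by ring] at this
    linarith
  have p45 : |(n : ℝ)| ≤ 2 * (|(m : ℝ) + n| * |(m : ℝ) + 2 * n|) := by nlinarith
  have q4 : |(m : ℝ) + 2 * n| ≤ |(m : ℝ) + 2 * n| ^ 5 := le_self_pow₀ a4 (by norm_num)
  have q5 : 1 ≤ |(m : ℝ) + 3 * n| ^ 3 := one_le_pow₀ a5
  have q6 : 1 ≤ |2 * (m : ℝ) + 3 * n| ^ 3 := one_le_pow₀ a6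
  have hn2 : (n : ℝ) ^ 2 = |(n : ℝ)| * |(n : ℝ)| := by rw [← sq_abs]; ring
  rw [F, Real.norm_eq_abs, abs_div, abs_one]
  simp only [abs_mul, abs_pow, pow_one]
  rw [show |(m : ℝ)| ^ 2 = (m : ℝ) ^ 2 from sq_abs _, hn2]
  generalize |(n : ℝ)| = N at *
  generalize |(m : ℝ) + n| = A at *
  generalize |(m : ℝ) + 2 * n| = B at *
  generalize |(m : ℝ) + 3 * n| ^ 3 = C at *
  generalize |2 * (m : ℝ) + 3 * n| ^ 3 = D at *
  generalize (m : ℝ) ^ 2 = M at *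
  have hN : 0 < N := by linarith
  have hA : 0 < A := by linarith
  have hB : 0 < B := by linarith
  have hC : 0 < C := by linarith
  have hD : 0 < D := by linarith
  have s1 : N ≤ 2 * (A * B ^ 5) :=
    p45.trans (by gcongr)
  have s2 : N ≤ 2 * (A * B ^ 5) * C * D := by
    calc N ≤ 2 * (A * B ^ 5) := s1
      _ ≤ 2 * (A * B ^ 5) * C := le_mul_of_one_le_right (by positivity) q5
      _ ≤ _ := le_mul_of_one_le_right (by positivity) q6
  rw [show 2 * (1 / M * (1 / (N * N))) = 2 / (M * (N * N)) by field_simp,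
    div_le_div_iff₀ (by positivity) (by positivity)]
  calc 1 * (M * (N * N)) = (M * N) * N := by ring
    _ ≤ (M * N) * (2 * (A * B ^ 5) * C * D) := by gcongr
    _ = _ := by ring

lemma F_summable : Summable (fun p : ℤ × ℤ => F p.1 p.2) := by
  have h : Summable (fun m : ℤ => 1 / (m : ℝ) ^ 2) :=
    Real.summable_one_div_int_pow.mpr (by norm_num)
  have h2 := (h.mul_of_nonneg h (fun _ => by simp; positivity) (fun _ => by simp; positivity))
  exact Summable.of_norm_bounded (h2.mul_left 2) fun p => F_bound p.1 p.2

lemma F_neg (x y : ℝ) : F x (-y) = - F (-x) y := by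
  unfold F
  rw [← div_neg]
  congr 1
  ring

lemma F_refl (x y : ℝ) : F x (-x - y) = - F x y := by
  unfold F
  rw [← div_neg]
  congr 1
  ring

lemma F_row (m : ℕ+) : ∑' n : ℕ+, F ((m : ℕ) : ℝ) ((n : ℕ) : ℝ)
    = ∑' n : ℕ+, F (-((m : ℕ) : ℝ)) ((n : ℕ) : ℝ) := by
  have hs : Summable (fun n : ℤ => F ((m : ℕ) : ℝ) (n : ℝ)) := by
    have := F_summable.comp_injective (i := fun n : ℤ => (((m : ℕ) : ℤ), n))
      (fun a b h => by simpa using h)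
    simpa [Function.comp_def] using this
  have h := hs.hasSum
  have h' := refl h (-(m : ℕ))
  have e : HasSum (fun n : ℤ => F ((m : ℕ) : ℝ) (n : ℝ)) (- ∑' n : ℤ, F ((m : ℕ) : ℝ) (n : ℝ)) := by
    refine h'.neg.congr_fun fun n => ?_
    push_cast
    rw [F_refl, neg_neg]
  have h0 := h.unique e
  rw [tsum_int_eq_zero_add_tsum_pnat hs] at h0
  simp only [Int.cast_neg, Int.cast_natCast, F_neg, tsum_neg, Int.cast_zero] at h0
  have z0 : F ((m : ℕ) : ℝ) 0 = 0 := by simp [F]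
  rw [z0] at h0
  linarith

lemma even_sum {k : ℕ} (hk : 1 < k) :
    HasSum (fun n : ℕ+ => if Even (n : ℕ) then 1 / ((n : ℕ) : ℝ) ^ k else 0) (z k / 2 ^ k) := by
  have hinj : Function.Injective (fun n : ℕ+ => 2 * n) := fun a b h => by simpa using h
  rw [← hinj.hasSum_iff]
  · refine ((z_pnat hk).div_const (2 ^ k)).congr_fun fun n => ?_
    have : Even (((2 * n : ℕ+)) : ℕ) := by simp
    simp only [Function.comp, this, if_true]
    push_cast
    rw [mul_pow, div_div, mul_comm]
  · intro n hn
    rw [if_neg]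
    rintro ⟨j, hj⟩
    apply hn
    have hj0 : 0 < j := by have := n.pos; omega
    refine ⟨⟨j, hj0⟩, ?_⟩
    apply PNat.eq
    rw [hj]
    change 2 * j = j + j
    omega

lemma column (n : ℕ+) : ∑' m : ℤ, F (m : ℝ) ((n : ℕ) : ℝ)
    = 5 / 2 * z 4 * (1 / ((n : ℕ) : ℝ) ^ 11)
      + (2 * (1 / 23328 + 139 / 8 - 49 / 2916) + 6 * (6656 / 729)) * z 2 * (1 / ((n : ℕ) : ℝ) ^ 13)
      - (277 / 279936 - 21 / 16 + 9695 / 64 - 8683 / 34992) * (1 / ((n : ℕ) : ℝ) ^ 15)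
      - 4 * (6656 / 729) * z 2 * (if Even (n : ℕ) then 1 / ((n : ℕ) : ℝ) ^ 13 else 0)
      - 536576 / 2187 * (if Even (n : ℕ) then 1 / ((n : ℕ) : ℝ) ^ 15 else 0) := by
  obtain ⟨n, hn⟩ := n
  simp only [PNat.mk_coe]
  have hn' : (n : ℝ) ≠ 0 := by positivity
  simp only [F_eq_g _ _ hn']
  rw [tsum_mul_left]
  by_cases he : Even n
  · obtain ⟨j, hj⟩ := id he
    rw [(inner n hn (2 * z 2) (536576 / 2187)
      (half_even_of_even (by norm_num) (by decide) _ (by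
        apply Even.mul_left; exact_mod_cast he))
      (term_pole hn (q := -3 * j) (by rw [hj]; push_cast; ring) _)).tsum_eq]
    simp only [he, if_true]
    field_simp
    ring
  · have ho : Odd n := Nat.not_even_iff_odd.mp he
    have hz : ∀ m : ℤ, ¬ ((m : ℝ) / n = -3 / 2) := by
      intro m hm
      rw [div_eq_iff hn'] at hm
      have : (2 * m : ℝ) = -3 * n := by linarith
      have h2 : 2 * m = -3 * (n : ℤ) := by exact_mod_cast this
      obtain ⟨j, hj⟩ := ho
      omega
    rw [(inner n hn (6 * z 2) 0
      (half_sq_of_odd _ (by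
        apply Odd.mul (by decide); exact_mod_cast ho))
      (by simp only [hz, if_false]; exact hasSum_zero)).tsum_eq]
    simp only [he, if_false]
    field_simp
    ring

lemma total : ∑' n : ℕ+, ∑' m : ℤ, F (m : ℝ) ((n : ℕ) : ℝ)
    = 2 * (5 / 4 * z 4 * z 11 + 1043857 / 23328 * z 2 * z 13 - 41971423 / 559872 * z 15) := by
  simp only [column]
  have a := (z_pnat (k := 11) (by norm_num)).mul_left (5 / 2 * z 4)
  have b := (z_pnat (k := 13) (by norm_num)).mul_left
    ((2 * (1 / 23328 + 139 / 8 - 49 / 2916) + 6 * (6656 / 729)) * z 2)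
  have c := (z_pnat (k := 15) (by norm_num)).mul_left
    ((277 / 279936 - 21 / 16 + 9695 / 64 - 8683 / 34992 : ℝ))
  have d := (even_sum (k := 13) (by norm_num)).mul_left (4 * (6656 / 729) * z 2)
  have e := (even_sum (k := 15) (by norm_num)).mul_left (536576 / 2187 : ℝ)
  rw [((((a.add b).sub c).sub d).sub e).tsum_eq]
  ring

lemma zeta_real : zetaG2 2 1 1 5 3 3
    = 5 / 4 * z 4 * z 11 + 1043857 / 23328 * z 2 * z 13 - 41971423 / 559872 * z 15 := by
  have hS : zetaG2 2 1 1 5 3 3 = ∑' (m : ℕ+) (n : ℕ+), F ((m : ℕ) : ℝ) ((n : ℕ) : ℝ) := rfl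
  have hT : zetaG2 2 1 1 5 3 3 = ∑' (m : ℕ+) (n : ℕ+), F (-((m : ℕ) : ℝ)) ((n : ℕ) : ℝ) := by
    rw [hS]
    exact tsum_congr F_row
  have s1 : Summable (fun p : ℕ+ × ℕ+ => F ((p.1 : ℕ) : ℝ) ((p.2 : ℕ) : ℝ)) := by
    have := F_summable.comp_injective (i := fun p : ℕ+ × ℕ+ => (((p.1 : ℕ) : ℤ), ((p.2 : ℕ) : ℤ)))
      (fun a b h => by
        simp only [Prod.mk.injEq, Nat.cast_inj, PNat.coe_inj] at h
        exact Prod.ext h.1 h.2)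
    simpa [Function.comp_def] using this
  have s2 : Summable (fun p : ℕ+ × ℕ+ => F (-((p.1 : ℕ) : ℝ)) ((p.2 : ℕ) : ℝ)) := by
    have := F_summable.comp_injective (i := fun p : ℕ+ × ℕ+ => (-((p.1 : ℕ) : ℤ), ((p.2 : ℕ) : ℤ)))
      (fun a b h => by
        simp only [Prod.mk.injEq, neg_inj, Nat.cast_inj, PNat.coe_inj] at h
        exact Prod.ext h.1 h.2)
    simpa [Function.comp_def] using this
  have c1 := Summable.tsum_comm (f := fun m n : ℕ+ => F ((m : ℕ) : ℝ) ((n : ℕ) : ℝ)) s1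
  have c2 := Summable.tsum_comm (f := fun m n : ℕ+ => F (-((m : ℕ) : ℝ)) ((n : ℕ) : ℝ)) s2
  have hcol : ∀ n : ℕ+, ∑' m : ℤ, F (m : ℝ) ((n : ℕ) : ℝ)
      = ∑' m : ℕ+, F ((m : ℕ) : ℝ) ((n : ℕ) : ℝ)
        + ∑' m : ℕ+, F (-((m : ℕ) : ℝ)) ((n : ℕ) : ℝ) := by
    intro n
    have hs : Summable (fun m : ℤ => F (m : ℝ) ((n : ℕ) : ℝ)) := by
      have := F_summable.comp_injective (i := fun m : ℤ => (m, ((n : ℕ) : ℤ)))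
        (fun a b h => by simpa using h)
      simpa [Function.comp_def] using this
    rw [tsum_int_eq_zero_add_tsum_pnat hs]
    simp only [Int.cast_neg, Int.cast_natCast, Int.cast_zero]
    have z0 : F 0 ((n : ℕ) : ℝ) = 0 := by simp [F]
    rw [z0, zero_add]
  have t := total
  simp only [hcol] at t
  have w1 : Summable (fun n : ℕ+ => ∑' m : ℕ+, F ((m : ℕ) : ℝ) ((n : ℕ) : ℝ)) :=
    s1.prod_symm.prod
  have w2 : Summable (fun n : ℕ+ => ∑' m : ℕ+, F (-((m : ℕ) : ℝ)) ((n : ℕ) : ℝ)) :=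
    s2.prod_symm.prod
  rw [Summable.tsum_add w1 w2] at t
  have u1 : ∑' (n : ℕ+) (m : ℕ+), F ((m : ℕ) : ℝ) ((n : ℕ) : ℝ) = zetaG2 2 1 1 5 3 3 := by
    rw [hS]; exact c1
  have u2 : ∑' (n : ℕ+) (m : ℕ+), F (-((m : ℕ) : ℝ)) ((n : ℕ) : ℝ) = zetaG2 2 1 1 5 3 3 := by
    rw [hT]; exact c2
  rw [u1, u2] at t
  linarith

end G2Aux

theorem zetaG2_211533 :
    (zetaG2 2 1 1 5 3 3 : ℂ) =
      (5 / 4) * riemannZeta 4 * riemannZeta 11 + (1043857 / 23328) * riemannZeta 2 * riemannZeta 13 - (41971423 / 559872) * riemannZeta 15 := by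
  have h2 := G2Aux.z_cast (k := 2) (by norm_num)
  have h4 := G2Aux.z_cast (k := 4) (by norm_num)
  have h11 := G2Aux.z_cast (k := 11) (by norm_num)
  have h13 := G2Aux.z_cast (k := 13) (by norm_num)
  have h15 := G2Aux.z_cast (k := 15) (by norm_num)
  push_cast at h2 h4 h11 h13 h15
  rw [G2Aux.zeta_real, ← h2, ← h4, ← h11, ← h13, ← h15]
  push_cast
  ring
end

section
/- The special value ζ₂(2,4,4,3,3,3; G₂) equals (1/8)·ζ(4)·ζ(15) + (281221/23328)·ζ(2)·ζ(17) − (11177971/559872)·ζ(19). -/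
namespace G2aux

noncomputable def F (m n : ℤ) : ℝ :=
  1 / ((m : ℝ) ^ 2 * (n : ℝ) ^ 4 * ((m : ℝ) + n) ^ 4 * ((m : ℝ) + 2 * n) ^ 3 *
    ((m : ℝ) + 3 * n) ^ 3 * (2 * (m : ℝ) + 3 * n) ^ 3)

noncomputable def G (m n : ℤ) : ℝ :=
  -1 / ((m : ℝ) ^ 3 * (n : ℝ) ^ 3 * ((m : ℝ) + n) ^ 4 * ((m : ℝ) + 2 * n) ^ 4 *
    ((m : ℝ) + 3 * n) ^ 3 * (2 * (m : ℝ) + 3 * n) ^ 2)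

noncomputable def e (k : ℕ) (x : ℤ) : ℝ := 1 / (x : ℝ) ^ k

noncomputable def Z (k : ℕ) : ℝ := ∑' n : ℕ, 1 / (n : ℝ) ^ k

lemma hs_congr {ι : Type*} {f g : ι → ℝ} {a b : ℝ} (h : HasSum g b) (hfg : ∀ m, f m = g m)
    (hab : a = b) : HasSum f a := by
  have : f = g := funext hfg
  rw [this, hab]; exact h

lemma zeta_eq (k : ℕ) (hk : 1 < k) : riemannZeta k = (Z k : ℂ) := by
  rw [zeta_nat_eq_tsum_of_gt_one hk, Z]
  push_cast
  rfl

lemma hasSum_Z (k : ℕ) (hk : 1 < k) : HasSum (fun n : ℕ => 1 / (n : ℝ) ^ k) (Z k) :=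
  (Real.summable_one_div_nat_pow.mpr hk).hasSum

lemma hasSum_e_even (k : ℕ) (hk : 1 < k) (h : Even k) : HasSum (e k) (2 * Z k) := by
  have h1 : HasSum (fun n : ℕ => e k (n : ℤ)) (Z k) := by
    simpa [e] using hasSum_Z k hk
  have h2 : HasSum (fun n : ℕ => e k (-(n : ℤ))) (Z k) := by
    simpa [e, h.neg_pow] using hasSum_Z k hk
  have := HasSum.of_nat_of_neg h1 h2
  have h0 : e k 0 = 0 := by
    have : k ≠ 0 := by omega
    simp [e, this]
  exact hs_congr this (fun _ => rfl) (by rw [h0]; ring)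

lemma hasSum_sign_e (k : ℕ) (hk : 1 < k) (h : Odd k) :
    HasSum (fun n : ℤ => (n.sign : ℝ) * e k n) (2 * Z k) := by
  have hk0 : k ≠ 0 := by omega
  have h1 : HasSum (fun n : ℕ => (((n : ℤ).sign : ℤ) : ℝ) * e k (n : ℤ)) (Z k) := by
    refine hs_congr (hasSum_Z k hk) (fun n => ?_) rfl
    rcases Nat.eq_zero_or_pos n with rfl | hn
    · simp [hk0]
    · rw [Int.sign_eq_one_of_pos (by exact_mod_cast hn)]
      simp [e]
  have h2 : HasSum (fun n : ℕ => (((-(n : ℤ)).sign : ℤ) : ℝ) * e k (-(n : ℤ))) (Z k) := by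
    refine hs_congr h1 (fun n => ?_) rfl
    simp [e, h.neg_pow, Int.sign_neg]
  have h3 := HasSum.of_nat_of_neg (f := fun n : ℤ => (n.sign : ℝ) * e k n) h1 h2
  refine hs_congr h3 (fun _ => rfl) ?_
  have : ((Int.sign 0 : ℤ) : ℝ) * e k 0 = 0 := by simp
  rw [this]; ring

lemma hasSum_shift {f : ℤ → ℝ} {a : ℝ} (h : HasSum f a) (c : ℤ) :
    HasSum (fun m => f (m + c)) a :=
  (Equiv.addRight c).hasSum_iff.mpr h

lemma hasSum_e3 : HasSum (e 3) 0 := by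
  have hs : Summable (e 3) := Real.summable_one_div_int_pow.mpr (by norm_num)
  have h1 := hs.hasSum
  have h2 : HasSum (fun m : ℤ => e 3 (-m)) (∑' m, e 3 m) := (Equiv.neg ℤ).hasSum_iff.mpr h1
  have h3 : HasSum (fun m : ℤ => e 3 (-m)) (-∑' m, e 3 m) := by
    refine hs_congr h1.neg (fun m => ?_) rfl
    simp only [e]; push_cast
    rw [Odd.neg_pow (by decide)]
    rw [one_div, one_div, inv_neg]
  have := h2.unique h3
  have h0 : ∑' m, e 3 m = 0 := by linarith
  rwa [h0] at h1

lemma hasSum_tel : HasSum (fun n : ℕ => (1 : ℝ) / ((n : ℝ) + 1) - 1 / ((n : ℝ) + 2)) 1 := by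
  have hpos : ∀ n : ℕ, 0 ≤ (1 : ℝ) / ((n : ℝ) + 1) - 1 / ((n : ℝ) + 2) := by
    intro n
    rw [sub_nonneg]
    apply one_div_le_one_div_of_le <;> [positivity; linarith]
  rw [hasSum_iff_tendsto_nat_of_nonneg hpos]
  have : ∀ n : ℕ, ∑ i ∈ Finset.range n, ((1 : ℝ) / ((i : ℝ) + 1) - 1 / ((i : ℝ) + 2))
      = 1 - 1 / ((n : ℝ) + 1) := by
    intro n
    induction n with
    | zero => simp
    | succ k ih => rw [Finset.sum_range_succ, ih]; push_cast; ring
  simp_rw [this]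
  simpa using tendsto_one_div_add_atTop_nhds_zero_nat (𝕜 := ℝ) |>.const_sub 1

lemma hasSum_e1_one : HasSum (fun m : ℤ => e 1 m - e 1 (m + 1)) 0 := by
  have h1 : HasSum (fun n : ℕ => e 1 (n : ℤ) - e 1 ((n : ℤ) + 1)) 0 := by
    rw [← hasSum_nat_add_iff' 1]
    refine hs_congr hasSum_tel (fun n => ?_) (by simp [e])
    simp only [e]; push_cast; ring
  have h2 : HasSum (fun n : ℕ => e 1 (-((n : ℤ) + 1)) - e 1 (-((n : ℤ) + 1) + 1)) 0 := by
    refine hs_congr h1 (fun n => ?_) rfl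
    have : (-((n : ℤ) + 1) + 1) = -(n : ℤ) := by ring
    rw [this]
    simp only [e, pow_one]; push_cast
    rw [one_div, one_div, one_div, one_div, inv_neg, inv_neg]; ring
  have h3 := HasSum.of_nat_of_neg_add_one (f := fun m : ℤ => e 1 m - e 1 (m + 1)) h1 h2
  exact hs_congr h3 (fun _ => rfl) (by norm_num)

lemma hasSum_e1_nat (N : ℕ) : HasSum (fun m : ℤ => e 1 m - e 1 (m + N)) 0 := by
  induction N with
  | zero => simp
  | succ k ih =>
    have := ih.add (hasSum_shift hasSum_e1_one (k : ℤ))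
    refine hs_congr this (fun m => ?_) (by simp)
    push_cast
    rw [← add_assoc]; ring

lemma hasSum_e1 (a b : ℤ) : HasSum (fun m : ℤ => e 1 (m + a) - e 1 (m + b)) 0 := by
  rcases le_total a b with h | h
  · obtain ⟨N, hN⟩ := Int.eq_ofNat_of_zero_le (sub_nonneg.mpr h)
    convert hasSum_shift (hasSum_e1_nat N) a using 4 with m
    rw [← hN]; ring
  · obtain ⟨N, hN⟩ := Int.eq_ofNat_of_zero_le (sub_nonneg.mpr h)
    have := (hasSum_shift (hasSum_e1_nat N) b).neg
    refine hs_congr this (fun m => ?_) (by simp)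
    rw [← hN, neg_sub]; congr 2; ring

lemma hasSum_e2_even : HasSum (fun m : ℤ => e 2 (2 * m)) (Z 2 / 2) := by
  refine hs_congr ((hasSum_e_even 2 (by norm_num) (by decide)).mul_left (1 / 4 : ℝ))
    (fun m => ?_) (by ring)
  simp only [e]; push_cast
  rw [mul_pow, one_div_mul_one_div]; norm_num

lemma hasSum_e2_odd : HasSum (fun m : ℤ => e 2 (2 * m + 1)) (3 / 2 * Z 2) := by
  have hs := hasSum_e_even 2 (by norm_num) (by decide)
  have hi : Function.Injective (fun m : ℤ => 2 * m + 1) := by intro a b h; simp at h; exact h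
  have hodd := (hs.summable.comp_injective hi).hasSum
  have key : HasSum (e 2) (Z 2 / 2 + ∑' m : ℤ, e 2 (2 * m + 1)) := by
    have he := hasSum_e2_even
    have hi2 : Function.Injective (fun m : ℤ => 2 * m) := by intro a b h; simp at h; exact h
    refine HasSum.add_isCompl (s := Set.range (fun m : ℤ => 2 * m))
      (t := Set.range (fun m : ℤ => 2 * m + 1)) ?_ ?_ ?_
    · have r1 : Set.range (fun m : ℤ => 2 * m) = {n : ℤ | Even n} := by
        ext x
        exact ⟨fun ⟨y, hy⟩ => ⟨y, by simp only at hy; omega⟩,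
          fun ⟨y, hy⟩ => ⟨y, by simp only; omega⟩⟩
      have r2 : Set.range (fun m : ℤ => 2 * m + 1) = {n : ℤ | Odd n} := by
        ext x
        exact ⟨fun ⟨y, hy⟩ => ⟨y, by simp only at hy; omega⟩,
          fun ⟨y, hy⟩ => ⟨y, by simp only; omega⟩⟩
      rw [r1, r2]
      exact Int.isCompl_even_odd
    · exact (hi2.hasSum_range_iff).mpr he
    · exact (hi.hasSum_range_iff).mpr hodd
  have := key.unique hs
  have h0 : ∑' m : ℤ, e 2 (2 * m + 1) = 3 / 2 * Z 2 := by linarith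
  rw [← h0]; exact hodd

lemma hasSum_e2_half (n : ℤ) :
    HasSum (fun m : ℤ => e 2 (2 * m + 3 * n)) (3 / 2 * Z 2 - if Even n then Z 2 else 0) := by
  split_ifs with h
  · obtain ⟨k, rfl⟩ := h
    convert hasSum_shift hasSum_e2_even (3 * k) using 3 with m
    · ring
    · ring
  · obtain ⟨k, rfl⟩ := Int.not_even_iff_odd.mp h
    convert hasSum_shift hasSum_e2_odd (3 * k + 1) using 3 with m
    · ring
    · ring

lemma hasSum_ind (a : ℤ) (c : ℝ) : HasSum (fun m : ℤ => if m + a = 0 then c else 0) c := by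
  convert hasSum_ite_eq (-a) c using 3 with m
  rw [eq_neg_iff_add_eq_zero]

lemma hasSum_ind_half (n : ℤ) (c : ℝ) :
    HasSum (fun m : ℤ => if 2 * m + 3 * n = 0 then c else 0) (if Even n then c else 0) := by
  split_ifs with h
  · obtain ⟨k, rfl⟩ := h
    refine hs_congr (hasSum_ind (3 * k) c) (fun m => ?_) rfl
    have : (2 * m + 3 * (k + k) = 0) ↔ (m + 3 * k = 0) := by omega
    simp only [this]
  · convert (hasSum_zero : HasSum (fun _ : ℤ => (0 : ℝ)) 0) using 2 with m
    rw [if_neg]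
    intro h2
    apply h
    rw [Int.even_iff]; omega

lemma G_eq (m n : ℤ) (hn : n ≠ 0) :
    G m n = 1 / 8 * e 15 n * (e 4 (m + n) + e 4 (m + 2 * n))
      + e 16 n * (-1 / 3888 * (e 3 (m + 0) - e 3 (m + 3 * n))
          - 13 / 16 * (e 3 (m + n) - e 3 (m + 2 * n)))
      + e 17 n * (25 / 11664 * (e 2 (m + 0) + e 2 (m + 3 * n))
          + 29 / 8 * (e 2 (m + n) + e 2 (m + 2 * n)) + 16384 / 729 * e 2 (2 * m + 3 * n))
      + e 18 n * (-227 / 23328 * (e 1 (m + 0) - e 1 (m + 3 * n))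
          - 411 / 32 * (e 1 (m + n) - e 1 (m + 2 * n)))
      - e 19 n * (1117 / 34992 * ((if m + 0 = 0 then 1 else 0) + (if m + 3 * n = 0 then 1 else 0))
          + 5107 / 128 * ((if m + n = 0 then 1 else 0) + (if m + 2 * n = 0 then 1 else 0))
          + 212992 / 2187 * (if 2 * m + 3 * n = 0 then 1 else 0)) := by
  have hn' : (n : ℝ) ≠ 0 := by exact_mod_cast hn
  by_cases h0 : m + 0 = 0
  · obtain rfl : m = 0 := by omega
    rw [if_pos h0, if_neg (by omega), if_neg (by omega), if_neg (by omega), if_neg (by omega)]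
    simp only [G, e]; push_cast; simp only [zero_add, add_zero, mul_zero]
    simp
    field_simp
    norm_num
  by_cases h1 : m + n = 0
  · obtain rfl : m = -n := by omega
    rw [if_neg h0, if_pos h1, if_neg (by omega), if_neg (by omega), if_neg (by omega)]
    have a1 : -n + 3 * n = 2 * n := by ring
    have a2 : -n + 2 * n = n := by ring
    have a3 : 2 * -n + 3 * n = n := by ring
    simp only [G, e, a1, a2, a3, h1]; push_cast
    simp
    field_simp
    norm_num
  by_cases h2 : m + 2 * n = 0
  · obtain rfl : m = -2 * n := by omega
    rw [if_neg h0, if_neg h1, if_pos h2, if_neg (by omega), if_neg (by omega)]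
    have a1 : -2 * n + 3 * n = n := by ring
    have a2 : -2 * n + n = - n := by ring
    have a3 : 2 * (-2 * n) + 3 * n = -n := by ring
    simp only [G, e, a1, a2, a3, h2]; push_cast
    simp
    field_simp
    norm_num
  by_cases h3 : m + 3 * n = 0
  · obtain rfl : m = -3 * n := by omega
    rw [if_neg h0, if_neg h1, if_neg h2, if_pos h3, if_neg (by omega)]
    have a1 : -3 * n + 2 * n = - n := by ring
    have a2 : -3 * n + n = - 2 * n := by ring
    have a3 : 2 * (-3 * n) + 3 * n = -3 * n := by ring
    simp only [G, e, a1, a2, a3, h3]; push_cast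
    simp
    field_simp
    norm_num
  by_cases h4 : 2 * m + 3 * n = 0
  · rw [if_neg h0, if_neg h1, if_neg h2, if_neg h3, if_pos h4]
    obtain ⟨k, rfl⟩ : ∃ k, n = 2 * k := ⟨n / 2, by omega⟩
    obtain rfl : m = -3 * k := by omega
    have hk : (k : ℝ) ≠ 0 := by
      intro h; apply hn'; push_cast; rw [h]; ring
    have a1 : -3 * k + 2 * k = - k := by ring
    have a2 : -3 * k + 2 * (2 * k) = k := by ring
    have a3 : -3 * k + 3 * (2 * k) = 3 * k := by ring
    simp only [G, e, a1, a2, a3, h4]; push_cast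
    have a4 : (2 * (-3 * (k : ℝ)) + 3 * (2 * k)) = 0 := by ring
    rw [a4]
    simp
    field_simp
    norm_num
  rw [if_neg h0, if_neg h1, if_neg h2, if_neg h3, if_neg h4]
  have h0' : (m : ℝ) ≠ 0 := by simpa using h0
  have h1' : (m : ℝ) + n ≠ 0 := by exact_mod_cast h1
  have h2' : (m : ℝ) + 2 * n ≠ 0 := by exact_mod_cast h2
  have h3' : (m : ℝ) + 3 * n ≠ 0 := by exact_mod_cast h3
  have h4' : 2 * (m : ℝ) + 3 * n ≠ 0 := by exact_mod_cast h4
  simp only [G, e]; push_cast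
  simp only [add_zero, mul_zero, sub_zero]
  generalize (m : ℝ) = x at *
  generalize (n : ℝ) = y at *
  obtain ⟨a, ha⟩ : ∃ a, a = x + y := ⟨_, rfl⟩
  obtain ⟨b, hb⟩ : ∃ b, b = x + 2 * y := ⟨_, rfl⟩
  obtain ⟨c, hc⟩ : ∃ c, c = x + 3 * y := ⟨_, rfl⟩
  obtain ⟨d, hd⟩ : ∃ d, d = 2 * x + 3 * y := ⟨_, rfl⟩
  rw [← ha] at h1' ⊢
  rw [← hb] at h2' ⊢
  rw [← hc] at h3' ⊢
  rw [← hd] at h4' ⊢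
  field_simp
  rw [ha, hb, hc, hd]
  ring

noncomputable def gv (n : ℤ) : ℝ :=
  Z 4 / 2 * e 15 n
    + e 17 n * (25 / 11664 * (4 * Z 2) + 29 / 8 * (4 * Z 2)
      + 16384 / 729 * (3 / 2 * Z 2 - if Even n then Z 2 else 0))
    - e 19 n * (1117 / 34992 * 2 + 5107 / 128 * 2 + 212992 / 2187 * (if Even n then 1 else 0))

lemma hasSum_G (n : ℤ) (hn : n ≠ 0) : HasSum (fun m => G m n) (gv n) := by
  have h4 := hasSum_e_even 4 (by norm_num) (by decide)
  have h2 := hasSum_e_even 2 (by norm_num) (by decide)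
  have h3 := hasSum_e3
  have A := ((hasSum_shift h4 n).add (hasSum_shift h4 (2 * n))).mul_left (1 / 8 * e 15 n)
  have B := ((((hasSum_shift h3 0).sub (hasSum_shift h3 (3 * n))).mul_left (-1 / 3888 : ℝ)).sub
    (((hasSum_shift h3 n).sub (hasSum_shift h3 (2 * n))).mul_left (13 / 16 : ℝ))).mul_left (e 16 n)
  have C := (((((hasSum_shift h2 0).add (hasSum_shift h2 (3 * n))).mul_left (25 / 11664 : ℝ)).add
    (((hasSum_shift h2 n).add (hasSum_shift h2 (2 * n))).mul_left (29 / 8 : ℝ))).add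
    ((hasSum_e2_half n).mul_left (16384 / 729 : ℝ))).mul_left (e 17 n)
  have D := (((hasSum_e1 0 (3 * n)).mul_left (-227 / 23328 : ℝ)).sub
    ((hasSum_e1 n (2 * n)).mul_left (411 / 32 : ℝ))).mul_left (e 18 n)
  have E := (((((hasSum_ind 0 1).add (hasSum_ind (3 * n) 1)).mul_left (1117 / 34992 : ℝ)).add
    (((hasSum_ind n 1).add (hasSum_ind (2 * n) 1)).mul_left (5107 / 128 : ℝ))).add
    ((hasSum_ind_half n 1).mul_left (212992 / 2187 : ℝ))).mul_left (e 19 n)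
  refine hs_congr ((((A.add B).add C).add D).sub E) (fun m => G_eq m n hn) ?_
  rw [gv]
  ring

lemma hasSum_sign_e_even (k : ℕ) (hk : 1 < k) (h : Odd k) :
    HasSum (fun n : ℤ => (n.sign : ℝ) * e k n * (if Even n then 1 else 0)) (2 * Z k / 2 ^ k) := by
  have hi2 : Function.Injective (fun m : ℤ => 2 * m) := by intro a b h; simp at h; exact h
  refine (hi2.hasSum_iff ?_).mp ?_
  · intro x hx
    rw [if_neg, mul_zero]
    rintro ⟨y, hy⟩
    exact hx ⟨y, (two_mul y).trans hy.symm⟩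
  · refine hs_congr ((hasSum_sign_e k hk h).mul_left (1 / 2 ^ k : ℝ)) (fun n => ?_) (by ring)
    have h1 : Even (2 * n) := even_two_mul n
    have h2 : (2 * n).sign = n.sign := by rw [Int.sign_mul, Int.sign_eq_one_of_pos (by norm_num : (0 : ℤ) < 2), one_mul]
    simp only [Function.comp, if_pos h1, h2, e]
    push_cast
    rw [mul_pow, ← one_div_mul_one_div]
    ring

lemma hasSum_gv : HasSum (fun n : ℤ => (n.sign : ℝ) * gv n)
    (8 * (1 / 8 * Z 4 * Z 15 + 281221 / 23328 * Z 2 * Z 17 - 11177971 / 559872 * Z 19)) := by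
  have A := (hasSum_sign_e 15 (by norm_num) (by decide)).mul_left (Z 4 / 2)
  have B := (hasSum_sign_e 17 (by norm_num) (by decide)).mul_left
    (25 / 11664 * (4 * Z 2) + 29 / 8 * (4 * Z 2) + 16384 / 729 * (3 / 2 * Z 2))
  have B' := (hasSum_sign_e_even 17 (by norm_num) (by decide)).mul_left (16384 / 729 * Z 2)
  have C := (hasSum_sign_e 19 (by norm_num) (by decide)).mul_left
    (1117 / 34992 * 2 + 5107 / 128 * 2 : ℝ)
  have C' := (hasSum_sign_e_even 19 (by norm_num) (by decide)).mul_left (212992 / 2187 : ℝ)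
  refine hs_congr ((((A.add B).sub B').sub C).sub C') (fun n => ?_) ?_
  · rw [gv]
    split_ifs <;> ring
  · ring

lemma abs_e_le (k : ℕ) (x : ℤ) : |e k x| ≤ 1 := by
  rw [e, abs_div, abs_one, abs_pow]
  rcases eq_or_ne x 0 with rfl | hx
  · rcases Nat.eq_zero_or_pos k with rfl | hk
    · simp
    · simp [hk.ne']
  · have h1 : (1 : ℝ) ≤ |(x : ℝ)| := by
      exact_mod_cast Int.one_le_abs hx
    rw [div_le_one (by positivity)]
    exact one_le_pow₀ h1

lemma F_eq (m n : ℤ) : F m n = e 2 m * e 4 n * e 4 (m + n) * e 3 (m + 2 * n) * e 3 (m + 3 * n) *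
    e 3 (2 * m + 3 * n) := by
  simp only [F, e]; push_cast
  simp only [one_div, mul_inv]

lemma F_bound (m n : ℤ) : |F m n| ≤ e 2 m * e 4 n := by
  have h2 : 0 ≤ e 2 m := by rw [e]; positivity
  have h4 : 0 ≤ e 4 n := by rw [e]; positivity
  rw [F_eq]
  simp only [abs_mul, abs_of_nonneg h2, abs_of_nonneg h4]
  have h0 : 0 ≤ e 2 m * e 4 n := mul_nonneg h2 h4
  refine (mul_le_of_le_one_right (by positivity) (abs_e_le _ _)).trans ?_
  refine (mul_le_of_le_one_right (by positivity) (abs_e_le _ _)).trans ?_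
  refine (mul_le_of_le_one_right (by positivity) (abs_e_le _ _)).trans ?_
  exact (mul_le_of_le_one_right (by positivity) (abs_e_le _ _))

lemma summable_bd : Summable (fun p : ℤ × ℤ => e 2 p.1 * e 4 p.2) := by
  refine Summable.mul_of_nonneg (Real.summable_one_div_int_pow.mpr (by norm_num))
    (Real.summable_one_div_int_pow.mpr (by norm_num)) ?_ ?_
  · intro x; rw [Pi.zero_apply]; show 0 ≤ e _ x; rw [e]; positivity
  · intro x; rw [Pi.zero_apply]; show 0 ≤ e _ x; rw [e]; positivity

lemma summable_mulF (w : ℤ × ℤ → ℝ) (hw : ∀ p, |w p| ≤ 1) :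
    Summable (fun p : ℤ × ℤ => w p * F p.1 p.2) := by
  refine Summable.of_norm_bounded summable_bd (fun p => ?_)
  rw [Real.norm_eq_abs, abs_mul]
  calc |w p| * |F p.1 p.2| ≤ 1 * |F p.1 p.2| := by gcongr; exact hw p
    _ ≤ _ := by rw [one_mul]; exact F_bound _ _

lemma abs_sign_le (n : ℤ) : |((n.sign : ℤ) : ℝ)| ≤ 1 := by
  rcases lt_trichotomy n 0 with h | h | h
  · simp [Int.sign_eq_neg_one_of_neg h]
  · simp [h]
  · simp [Int.sign_eq_one_of_pos h]

lemma F_neg (m n : ℤ) : F (-m) (-n) = -F m n := by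
  simp only [F]
  rw [← div_neg]
  congr 1
  push_cast
  ring

lemma F_refl (m n : ℤ) : F m (-m - n) = -F m n := by
  simp only [F]
  rw [← div_neg]
  congr 1
  push_cast
  ring

lemma F_refl2 (m n : ℤ) : F (-m - 3 * n) n = 1 / (-(((m : ℝ) + 3 * n) ^ 2 * (n : ℝ) ^ 4 *
    ((m : ℝ) + 2 * n) ^ 4 * ((m : ℝ) + n) ^ 3 * (m : ℝ) ^ 3 * (2 * (m : ℝ) + 3 * n) ^ 3)) := by
  simp only [F]
  congr 1
  push_cast
  ring

lemma F_add (m n : ℤ) : F m n + F (-m - 3 * n) n = G m n := by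
  rw [F_refl2, F, G]
  generalize (m : ℝ) = x
  generalize (n : ℝ) = y
  obtain ⟨a, ha⟩ : ∃ a, a = x + y := ⟨_, rfl⟩
  obtain ⟨b, hb⟩ : ∃ b, b = x + 2 * y := ⟨_, rfl⟩
  obtain ⟨c, hc⟩ : ∃ c, c = x + 3 * y := ⟨_, rfl⟩
  obtain ⟨d, hd⟩ : ∃ d, d = 2 * x + 3 * y := ⟨_, rfl⟩
  rw [← ha, ← hb, ← hc, ← hd]
  by_cases h1 : x = 0
  · simp [h1]
  by_cases h2 : y = 0
  · simp [h2]
  by_cases h3 : a = 0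
  · simp [h3]
  by_cases h4 : b = 0
  · simp [h4]
  by_cases h5 : c = 0
  · simp [h5]
  by_cases h6 : d = 0
  · simp [h6]
  field_simp
  rw [ha, hb, hc, hd]
  ring

def inv1 : ℤ × ℤ ≃ ℤ × ℤ where
  toFun p := (p.1, -p.1 - p.2)
  invFun p := (p.1, -p.1 - p.2)
  left_inv p := by ext <;> simp
  right_inv p := by ext <;> simp

def inv2 : ℤ × ℤ ≃ ℤ × ℤ where
  toFun p := (-p.1 - 3 * p.2, p.2)
  invFun p := (-p.1 - 3 * p.2, p.2)
  left_inv p := by ext <;> simp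
  right_inv p := by ext <;> simp

lemma hasSum_V : HasSum (fun p : ℤ × ℤ => (p.1.sign : ℝ) * F p.1 p.2) 0 := by
  have h1 := (summable_mulF (fun p => (p.1.sign : ℝ)) (fun p => abs_sign_le _)).hasSum
  have h2 := inv1.hasSum_iff.mpr h1
  have h3 := hs_congr h1.neg (f := (fun p : ℤ × ℤ => (p.1.sign : ℝ) * F p.1 p.2) ∘ inv1)
    (fun p => by simp [inv1, F_refl]) rfl
  have := h2.unique h3
  exact hs_congr h1 (fun _ => rfl) (by linarith)

lemma hasSum_U {u : ℝ} (hu : HasSum (fun p : ℤ × ℤ => (p.2.sign : ℝ) * F p.1 p.2) u) :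
    2 * u = 8 * (1 / 8 * Z 4 * Z 15 + 281221 / 23328 * Z 2 * Z 17 - 11177971 / 559872 * Z 19) := by
  have h2 := inv2.hasSum_iff.mpr hu
  have h3 : HasSum (fun p : ℤ × ℤ => (p.2.sign : ℝ) * G p.1 p.2) (2 * u) := by
    refine hs_congr (hu.add h2) (fun p => ?_) (by ring)
    rw [← F_add]
    simp only [Function.comp, inv2, Equiv.coe_fn_mk]
    ring
  have h4 := (Equiv.prodComm ℤ ℤ).hasSum_iff.mpr h3
  have h5 := HasSum.prod_fiberwise h4 (g := fun n : ℤ => (n.sign : ℝ) * gv n) (fun n => by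
    simp only [Function.comp, Equiv.prodComm_apply, Prod.fst_swap, Prod.snd_swap, Prod.swap_prod_mk]
    rcases eq_or_ne n 0 with rfl | hn
    · simp
    · exact (hasSum_G n hn).mul_left _)
  exact h5.unique hasSum_gv

noncomputable def ind (p : ℤ × ℤ) : ℝ := if 0 < p.1 ∧ 0 < p.2 then 1 else 0

lemma abs_ind_le (p : ℤ × ℤ) : |ind p| ≤ 1 := by
  rw [ind]; split_ifs <;> simp

lemma split_sign (m n : ℤ) : (m.sign : ℝ) * F m n + (n.sign : ℝ) * F m n =
    2 * (ind (m, n) * F m n + ind (-m, -n) * F (-m) (-n)) := by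
  rw [F_neg]
  have z1 : ∀ n, F 0 n = 0 := fun n => by simp [F]
  have z2 : ∀ m, F m 0 = 0 := fun m => by simp [F]
  rcases lt_trichotomy m 0 with h | h | h
  · rcases lt_trichotomy n 0 with h' | h' | h'
    · rw [ind, ind, if_neg (by simp only; omega), if_pos (by simp only; omega),
        Int.sign_eq_neg_one_of_neg h, Int.sign_eq_neg_one_of_neg h']
      push_cast; ring
    · simp [h', z2]
    · rw [ind, ind, if_neg (by simp only; omega), if_neg (by simp only; omega),
        Int.sign_eq_neg_one_of_neg h, Int.sign_eq_one_of_pos h']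
      push_cast; ring
  · simp [h, z1]
  · rcases lt_trichotomy n 0 with h' | h' | h'
    · rw [ind, ind, if_neg (by simp only; omega), if_neg (by simp only; omega),
        Int.sign_eq_one_of_pos h, Int.sign_eq_neg_one_of_neg h']
      push_cast; ring
    · simp [h', z2]
    · rw [ind, ind, if_pos (by simp only; omega), if_neg (by simp only; omega),
        Int.sign_eq_one_of_pos h, Int.sign_eq_one_of_pos h']
      push_cast; ring

def emb (p : ℕ+ × ℕ+) : ℤ × ℤ := (((p.1 : ℕ) : ℤ), ((p.2 : ℕ) : ℤ))

lemma emb_inj : Function.Injective emb := by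
  rintro ⟨a, b⟩ ⟨c, d⟩ h
  simp only [emb, Prod.mk.injEq, Nat.cast_inj, PNat.coe_inj] at h
  rw [h.1, h.2]

lemma hasSum_S : HasSum (fun p : ℤ × ℤ => ind p * F p.1 p.2) (zetaG2 2 4 4 3 3 3) := by
  have hs := summable_mulF ind abs_ind_le
  have h1 := (hs.comp_injective emb_inj)
  refine (emb_inj.hasSum_iff ?_).mp ?_
  · rintro ⟨m, n⟩ hx
    rw [ind, if_neg, zero_mul]
    rintro ⟨hm, hn⟩
    simp only at hm hn
    exact hx ⟨(⟨m.toNat, by omega⟩, ⟨n.toNat, by omega⟩), by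
      simp only [emb, PNat.mk_coe, Prod.mk.injEq]; omega⟩
  · refine hs_congr h1.hasSum (fun _ => rfl) ?_
    rw [h1.tsum_prod, zetaG2]
    refine tsum_congr (fun m => tsum_congr (fun n => ?_))
    have hm := m.pos
    have hn := n.pos
    have hi : ind (emb (m, n)) = 1 := by
      rw [ind, if_pos]
      simp only [emb]; omega
    simp only [Function.comp]
    rw [hi, one_mul]
    simp only [emb, F]
    push_cast
    rfl

lemma main_real : zetaG2 2 4 4 3 3 3 =
    1 / 8 * Z 4 * Z 15 + 281221 / 23328 * Z 2 * Z 17 - 11177971 / 559872 * Z 19 := by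
  have hu := (summable_mulF (fun p => (p.2.sign : ℝ)) (fun p => abs_sign_le _)).hasSum
  have h1 := hasSum_V.add hu
  have h2 := ((hasSum_S.add ((Equiv.neg (ℤ × ℤ)).hasSum_iff.mpr hasSum_S)).mul_left 2)
  have h3 := hs_congr h2 (fun p : ℤ × ℤ => split_sign p.1 p.2) rfl
  have h4 := h1.unique h3
  have h5 := hasSum_U hu
  linarith

end G2aux

theorem zetaG2_244333 :
    (zetaG2 2 4 4 3 3 3 : ℂ) =
      (1 / 8) * riemannZeta 4 * riemannZeta 15 + (281221 / 23328) * riemannZeta 2 * riemannZeta 17 - (11177971 / 559872) * riemannZeta 19 := by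
  have h4 := G2aux.zeta_eq 4 (by norm_num)
  have h15 := G2aux.zeta_eq 15 (by norm_num)
  have h2 := G2aux.zeta_eq 2 (by norm_num)
  have h17 := G2aux.zeta_eq 17 (by norm_num)
  have h19 := G2aux.zeta_eq 19 (by norm_num)
  push_cast at h4 h15 h2 h17 h19
  rw [h4, h15, h2, h17, h19, G2aux.main_real]
  push_cast
  rfl
end
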